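/- arXiv:2206.03672 — 2 statements merged into one kernel-verified Lean document; each statement's English description precedes it below -/
import Mathlib

section
/- Let R : ℝⁿ → ℝ^m be a linear map satisfying R^T k ≠ 0 for all nonzero k ∈ ℤ^m, and let f(x,y) ∈ L¹(Ω; C_♯(Y^m)) where Ω ⊂ ℝⁿ is bounded open. Then x ↦ f(x, Rx/η) is measurable on Ω, ‖f(·, R·/η)‖_{L¹(Ω)} ≤ ∫_Ω sup_{y ∈ Y^m} |f(x,y)| dx, and lim_{η→0} ∫_Ω f(x, Rx/η) dx = ∫_Ω ∫_{Y^m} f(x,y) dx dy. -/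
open MeasureTheory Filter Topology Matrix

noncomputable section

/-- The open unit cube `Y^m = (0,1)^m`. -/
def cube (m : ℕ) : Set (Fin m → ℝ) := Set.univ.pi fun _ => Set.Ioo (0:ℝ) 1

/-- `Y^m`-periodicity: invariance under integer translations. -/
def Zper {m : ℕ} {α : Type*} (g : (Fin m → ℝ) → α) : Prop :=
  ∀ (k : Fin m → ℤ) (y : Fin m → ℝ), g (y + fun i => (k i : ℝ)) = g y

/-- Cut-and-projection irrationality condition: `Rᵀ k ≠ 0` for nonzero integer `k`. -/
def Irr {m n : ℕ} (R : Matrix (Fin m) (Fin n) ℝ) : Prop :=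
  ∀ k : Fin m → ℤ, k ≠ 0 → R.transpose.mulVec (fun i => (k i : ℝ)) ≠ 0

/-- Admissible test functions: `φ ∈ L^q(Ω; C_♯(Y^m))`. -/
def TestFun {n m : ℕ} (q : ℝ) (Ω : Set (Fin n → ℝ))
    (φ : (Fin n → ℝ) → (Fin m → ℝ) → ℝ) : Prop :=
  (∀ x, Continuous (φ x)) ∧ (∀ x, Zper (φ x)) ∧
  (∀ y, AEMeasurable (fun x => φ x y) (volume.restrict Ω)) ∧
  Integrable (fun x => (⨆ y, |φ x y|) ^ q) (volume.restrict Ω)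

/-- Weak two-scale cut-and-projection convergence along a sequence of scales `η`. -/
def WeakTwoScale {n m : ℕ} (q : ℝ) (Ω : Set (Fin n → ℝ)) (R : Matrix (Fin m) (Fin n) ℝ)
    (η : ℕ → ℝ) (u : ℕ → (Fin n → ℝ) → ℝ)
    (u₀ : (Fin n → ℝ) → (Fin m → ℝ) → ℝ) : Prop :=
  ∀ φ : (Fin n → ℝ) → (Fin m → ℝ) → ℝ, TestFun q Ω φ →
    Tendsto (fun k => ∫ x in Ω, u k x * φ x ((η k)⁻¹ • R.mulVec x)) atTop
      (𝓝 (∫ x in Ω, ∫ y in cube m, u₀ x y * φ x y))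

/-- Classical gradient on `ℝ^m`. -/
def gradY {m : ℕ} (θ : (Fin m → ℝ) → ℝ) (y : Fin m → ℝ) : Fin m → ℝ :=
  fun j => fderiv ℝ θ y (Pi.single j 1)

/-- The projected gradient `grad_R θ = Rᵀ ∇_y θ`. -/
def gradR {m n : ℕ} (R : Matrix (Fin m) (Fin n) ℝ) (θ : (Fin m → ℝ) → ℝ)
    (y : Fin m → ℝ) : Fin n → ℝ :=
  R.transpose.mulVec (gradY θ y)

/-- The projected divergence `div_R φ = (Rᵀ ∇_y) · φ`. -/
def divR {m n : ℕ} (R : Matrix (Fin m) (Fin n) ℝ) (φ : (Fin m → ℝ) → Fin n → ℝ)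
    (y : Fin m → ℝ) : ℝ :=
  ∑ i, gradR R (fun z => φ z i) y i

/-- `G` is the weak periodic cut-and-projection gradient `grad_R θ`. -/
def IsWeakGradR {m n : ℕ} (R : Matrix (Fin m) (Fin n) ℝ) (θ : (Fin m → ℝ) → ℝ)
    (G : (Fin m → ℝ) → Fin n → ℝ) : Prop :=
  ∀ ψ : (Fin m → ℝ) → Fin n → ℝ, ContDiff ℝ (⊤ : ℕ∞) ψ → (∀ i, Zper fun y => ψ y i) →
    ∫ y in cube m, θ y * divR R ψ y = - ∫ y in cube m, G y ⬝ᵥ ψ y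

/-- `d` is the weak periodic cut-and-projection divergence `div_R φ`. -/
def IsWeakDivR {m n : ℕ} (R : Matrix (Fin m) (Fin n) ℝ) (φ : (Fin m → ℝ) → Fin n → ℝ)
    (d : (Fin m → ℝ) → ℝ) : Prop :=
  ∀ ψ : (Fin m → ℝ) → ℝ, ContDiff ℝ (⊤ : ℕ∞) ψ → Zper ψ →
    ∫ y in cube m, φ y ⬝ᵥ gradR R ψ y = - ∫ y in cube m, d y * ψ y

/-- `G` is the weak (full) periodic gradient `∇_y θ`. -/
def IsWeakGrad {m : ℕ} (θ : (Fin m → ℝ) → ℝ) (G : (Fin m → ℝ) → Fin m → ℝ) : Prop :=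
  ∀ ψ : (Fin m → ℝ) → ℝ, ContDiff ℝ (⊤ : ℕ∞) ψ → Zper ψ → ∀ j,
    ∫ y in cube m, θ y * gradY ψ y j = - ∫ y in cube m, G y j * ψ y

/-- `G` is the weak gradient of `u` on `Ω`. -/
def IsWeakGradOn {n : ℕ} (Ω : Set (Fin n → ℝ)) (u : (Fin n → ℝ) → ℝ)
    (G : (Fin n → ℝ) → Fin n → ℝ) : Prop :=
  ∀ ψ : (Fin n → ℝ) → ℝ, ContDiff ℝ (⊤ : ℕ∞) ψ → HasCompactSupport ψ → tsupport ψ ⊆ Ω → ∀ j,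
    ∫ x in Ω, u x * fderiv ℝ ψ x (Pi.single j 1) = - ∫ x in Ω, G x j * ψ x

/-- `d` is the weak divergence of `v` on `Ω`. -/
def IsWeakDivOn {n : ℕ} (Ω : Set (Fin n → ℝ)) (v : (Fin n → ℝ) → Fin n → ℝ)
    (d : (Fin n → ℝ) → ℝ) : Prop :=
  ∀ ψ : (Fin n → ℝ) → ℝ, ContDiff ℝ (⊤ : ℕ∞) ψ → HasCompactSupport ψ → tsupport ψ ⊆ Ω →
    ∫ x in Ω, v x ⬝ᵥ (fun j => fderiv ℝ ψ x (Pi.single j 1)) = - ∫ x in Ω, d x * ψ x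

/-- Membership in `W_0^{1,p}(Ω)` with weak gradient `G`. -/
def MemW1p0 {n : ℕ} (p : ℝ) (Ω : Set (Fin n → ℝ)) (u : (Fin n → ℝ) → ℝ)
    (G : (Fin n → ℝ) → Fin n → ℝ) : Prop :=
  Integrable (fun x => |u x| ^ p) (volume.restrict Ω) ∧
  Integrable (fun x => ‖G x‖ ^ p) (volume.restrict Ω) ∧
  IsWeakGradOn Ω u G ∧
  ∃ v : ℕ → (Fin n → ℝ) → ℝ,
    (∀ j, ContDiff ℝ (⊤ : ℕ∞) (v j) ∧ HasCompactSupport (v j) ∧ tsupport (v j) ⊆ Ω) ∧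
    Tendsto (fun j => (∫ x in Ω, |v j x - u x| ^ p) +
      ∫ x in Ω, ‖(fun i => fderiv ℝ (v j) x (Pi.single i 1)) - G x‖ ^ p) atTop (𝓝 0)

/-!
View `f` as an integrable map `F` from `Ω` to the Banach space of continuous functions on the torus.
The oscillating integrals and the averaged one are continuous in `F ∈ L¹`, uniformly in `η`, so it
suffices to treat `F = 𝟙_s ⊗ e_k` with `e_k` a character, because these span a dense subspace.
There `e_k (R x / η) = exp (2πi ⟨Rᵀ k, x⟩ / η)`: for `k = 0` both integrals agree, and for `k ≠ 0`
the frequency `Rᵀ k / η` escapes to infinity, so the Riemann–Lebesgue lemma gives the limit `0`,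
which is also the mean of `e_k`.
-/

open scoped FourierTransform

section Evaluation

variable {X T E : Type*} [MeasurableSpace X] {μ : Measure X} [TopologicalSpace T]
  [CompactSpace T] [NormedAddCommGroup E]

lemma aestronglyMeasurable_of_aemeasurable_eval [SecondCountableTopology T] [T2Space T]
    [CompleteSpace E] [SecondCountableTopology E] [MeasurableSpace E] [BorelSpace E]
    {F : X → C(T, E)} (hF : ∀ t, AEMeasurable (fun x => F x t) μ) : AEStronglyMeasurable F μ := by
  borelize C(T, E)
  cases isEmpty_or_nonempty T
  · exact (measurable_of_subsingleton_codomain F).aestronglyMeasurable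
  let evalDense : C(T, E) → ℕ → E := fun c k => c (TopologicalSpace.denseSeq T k)
  have hcont : Continuous evalDense := by fun_prop
  have hinj : Function.Injective evalDense := fun c d hcd => DFunLike.coe_injective <|
    (TopologicalSpace.denseRange_denseSeq T).equalizer c.continuous d.continuous hcd
  have hcomp : AEMeasurable (evalDense ∘ F) μ := aemeasurable_pi_lambda _ fun k => hF _
  -- By the Lusin–Souslin theorem, a continuous injection of Polish spaces is a Borel embedding.
  exact ((hcont.measurableEmbedding hinj).aemeasurable_comp_iff.1 hcomp).aestronglyMeasurable

lemma aestronglyMeasurable_eval_comp {F : X → C(T, E)} (hF : AEStronglyMeasurable F μ) {φ : X → T}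
    (hφ : AEStronglyMeasurable φ μ) : AEStronglyMeasurable (fun x => F x (φ x)) μ :=
  (continuous_eval (F := C(T, E)) (X := T) (Y := E)).comp_aestronglyMeasurable (hF.prodMk hφ)

lemma integrable_eval_comp {F : X → C(T, E)} (hF : Integrable F μ) {φ : X → T}
    (hφ : AEStronglyMeasurable φ μ) : Integrable (fun x => F x (φ x)) μ :=
  hF.norm.mono' (aestronglyMeasurable_eval_comp hF.aestronglyMeasurable hφ)
    (ae_of_all _ fun x => (F x).norm_coe_le_norm _)

lemma lipschitzWith_integral_eval_comp [NormedSpace ℝ E] {φ : X → T}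
    (hφ : AEStronglyMeasurable φ μ) :
    LipschitzWith 1 fun F : X →₁[μ] C(T, E) => ∫ x, F x (φ x) ∂μ := by
  refine LipschitzWith.of_dist_le_mul fun F G => ?_
  have hF := L1.integrable_coeFn F
  have hG := L1.integrable_coeFn G
  rw [NNReal.coe_one, one_mul, L1.dist_eq_integral_dist, dist_eq_norm,
    ← integral_sub (integrable_eval_comp hF hφ) (integrable_eval_comp hG hφ)]
  simp only [dist_eq_norm]
  exact norm_integral_le_of_norm_le (hF.sub hG).norm
    (ae_of_all _ fun x => (F x - G x).norm_coe_le_norm (φ x))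

end Evaluation

lemma lipschitzWith_indicatorConstLp {X E : Type*} [MeasurableSpace X] {μ : Measure X}
    [NormedAddCommGroup E] {s : Set X} (hs : MeasurableSet s) (hμs : μ s ≠ ⊤) :
    LipschitzWith (μ s).toNNReal (indicatorConstLp (E := E) 1 hs hμs) := by
  refine LipschitzWith.of_dist_le_mul fun c d => ?_
  rw [dist_eq_norm, dist_eq_norm, indicatorConstLp_sub, mul_comm]
  change _ ≤ ‖c - d‖ * μ.real s
  simpa only [ENNReal.toReal_one, div_one, Real.rpow_one] using
    norm_indicatorConstLp_le (p := 1) (hs := hs) (hμs := hμs) (c := c - d)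

section AveragesTo

variable {X T E ι 𝕜 : Type*} [MeasurableSpace X] {μ : Measure X} [TopologicalSpace T]
  [NormedAddCommGroup E] [NormedSpace ℝ E] [RCLike 𝕜] [NormedSpace 𝕜 E]
  {l : Filter ι} {φ : ι → X → T} {L : C(T, E) →L[𝕜] E} {F G : X → C(T, E)}

variable (μ l φ L) in
/-- Along the oscillating maps `φ i`, the integrals of `x ↦ F x (φ i x)` converge to the integral of
the averages `L (F x)`. The average is an arbitrary continuous functional, so that the closure
properties below do not depend on how it arises. -/
def AveragesTo (F : X → C(T, E)) : Prop :=
  Tendsto (fun i => ∫ x, F x (φ i x) ∂μ) l (𝓝 (∫ x, L (F x) ∂μ))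

namespace AveragesTo

lemma congr_ae (h : F =ᵐ[μ] G) (hF : AveragesTo μ l φ L F) : AveragesTo μ l φ L G := by
  rw [AveragesTo, ← integral_congr_ae (h.mono fun x hx => congrArg L hx)]
  exact hF.congr fun i => integral_congr_ae (h.mono fun x hx => congrArg (· (φ i x)) hx)

lemma const_smul [SMulCommClass ℝ 𝕜 E] (a : 𝕜) (hF : AveragesTo μ l φ L F) :
    AveragesTo μ l φ L (a • F) := by
  simpa only [AveragesTo, Pi.smul_apply, map_smul, ContinuousMap.smul_apply, integral_smul]
    using Tendsto.const_smul hF a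

lemma indicator_const [CompleteSpace E] {s : Set X} (hs : MeasurableSet s) {c : C(T, E)}
    (hc : Tendsto (fun i => ∫ x in s, c (φ i x) ∂μ) l (𝓝 (μ.real s • L c))) :
    AveragesTo μ l φ L (s.indicator fun _ => c) := by
  have heval (i : ι) : (fun x => (s.indicator (fun _ => c) x) (φ i x)) =
      s.indicator fun x => c (φ i x) := by
    ext x
    by_cases hx : x ∈ s <;> simp [hx]
  have hL : (fun x => L (s.indicator (fun _ => c) x)) = s.indicator fun _ => L c :=
    (Set.indicator_comp_of_zero (map_zero L)).symm
  rw [AveragesTo, hL, integral_indicator hs, setIntegral_const]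
  simpa only [heval, integral_indicator hs] using hc

variable [CompactSpace T]

lemma add (hφ : ∀ i, AEStronglyMeasurable (φ i) μ) (hF : Integrable F μ) (hG : Integrable G μ)
    (hFL : AveragesTo μ l φ L F) (hGL : AveragesTo μ l φ L G) : AveragesTo μ l φ L (F + G) := by
  have hsum := Tendsto.add hFL hGL
  rw [← integral_add (L.integrable_comp hF) (L.integrable_comp hG)] at hsum
  simp only [AveragesTo, Pi.add_apply, map_add, ContinuousMap.add_apply]
  refine hsum.congr fun i => ?_
  rw [← integral_add (integrable_eval_comp hF (hφ i)) (integrable_eval_comp hG (hφ i))]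

lemma isClosed_setOf_L1 (hφ : ∀ i, AEStronglyMeasurable (φ i) μ) :
    IsClosed {F : X →₁[μ] C(T, E) | AveragesTo μ l φ L F} :=
  (LipschitzWith.uniformEquicontinuous _ 1 fun i =>
    lipschitzWith_integral_eval_comp (hφ i)).equicontinuous.isClosed_setOfPred_tendsto
      L.continuous_integral_comp_L1

lemma isClosed_setOf_indicator_const (hφ : ∀ i, AEStronglyMeasurable (φ i) μ) {s : Set X}
    (hs : MeasurableSet s) (hμs : μ s ≠ ⊤) :
    IsClosed {c : C(T, E) | AveragesTo μ l φ L (s.indicator fun _ => c)} := by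
  have hpre := (isClosed_setOf_L1 (l := l) (L := L) hφ).preimage
    (lipschitzWith_indicatorConstLp hs hμs).continuous
  convert! hpre using 1
  ext c
  exact ⟨congr_ae indicatorConstLp_coeFn.symm, congr_ae indicatorConstLp_coeFn⟩

lemma indicator_const_of_mem_closure_span [SMulCommClass ℝ 𝕜 E]
    (hφ : ∀ i, AEStronglyMeasurable (φ i) μ) {S : Set C(T, E)} {s : Set X} (hs : MeasurableSet s)
    (hμs : μ s ≠ ⊤) (hS : ∀ c ∈ S, AveragesTo μ l φ L (s.indicator fun _ => c)) {c : C(T, E)}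
    (hc : c ∈ (Submodule.span 𝕜 S).topologicalClosure) :
    AveragesTo μ l φ L (s.indicator fun _ => c) := by
  have hint (c : C(T, E)) : Integrable (s.indicator fun _ => c) μ :=
    (integrable_indicator_iff hs).2 (integrableOn_const hμs)
  refine closure_minimal (fun c hc => ?_) (isClosed_setOf_indicator_const hφ hs hμs) hc
  induction hc using Submodule.span_induction with
  | mem c hc => exact hS c hc
  | zero => simpa [AveragesTo] using tendsto_const_nhds
  | add a b _ _ ha hb =>
    have hadd : (s.indicator fun _ => a + b) = s.indicator (fun _ => a) + s.indicator fun _ => b :=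
      Set.indicator_add' ..
    simpa only [Set.mem_ofPred_eq, hadd] using ha.add hφ (hint a) (hint b) hb
  | smul a b _ hb =>
    have hsmul : (s.indicator fun _ => a • b) = a • s.indicator fun _ => b :=
      Set.indicator_const_smul ..
    simpa only [Set.mem_ofPred_eq, hsmul] using hb.const_smul a

theorem of_integrable [SMulCommClass ℝ 𝕜 E] (hφ : ∀ i, AEStronglyMeasurable (φ i) μ)
    {S : Set C(T, E)} (hS : (Submodule.span 𝕜 S).topologicalClosure = ⊤)
    (h : ∀ c ∈ S, ∀ s, MeasurableSet s → μ s ≠ ⊤ → AveragesTo μ l φ L (s.indicator fun _ => c))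
    (hF : Integrable F μ) : AveragesTo μ l φ L F := by
  refine Integrable.induction (AveragesTo μ l φ L) (fun c s hs hμs => ?_)
    (fun F G _ hF hG hFL hGL => hFL.add hφ hF hG hGL) (isClosed_setOf_L1 hφ)
    (fun F G hFG _ hFL => hFL.congr_ae hFG) hF
  exact indicator_const_of_mem_closure_span hφ hs hμs.ne (fun c hc => h c hc s hs hμs.ne)
    (hS ▸ Submodule.mem_top)

end AveragesTo

end AveragesTo

section RiemannLebesgue

variable {V : Type*} [NormedAddCommGroup V] [NormedSpace ℝ V]

lemma tendsto_neg_inv_smul_cobounded {w : V} (hw : w ≠ 0) :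
    Tendsto (fun η : ℝ => -(η⁻¹ • w)) (𝓝[≠] 0) (Bornology.cobounded V) := by
  rw [← tendsto_norm_atTop_iff_cobounded]
  simp only [norm_neg, norm_smul]
  exact (tendsto_norm_cobounded_atTop.comp Filter.tendsto_inv₀_nhdsNE_zero).atTop_mul_const
    (norm_pos_iff.2 hw)

variable [FiniteDimensional ℝ V] [MeasurableSpace V] [BorelSpace V]
  {lam μ : Measure V} [lam.IsAddHaarMeasure] [IsFiniteMeasure μ]

lemma tendsto_integral_fourierChar_cocompact (hμ : μ ≪ lam) :
    Tendsto (fun w : StrongDual ℝ V => ∫ v, (𝐞 (-w v) : ℂ) ∂μ) (cocompact (StrongDual ℝ V))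
      (𝓝 0) := by
  refine (tendsto_integral_exp_smul_cocompact
    (fun v => ((μ.rnDeriv lam v).toReal : ℂ)) lam).congr fun w => ?_
  rw [← integral_rnDeriv_smul hμ]
  refine integral_congr_ae (ae_of_all _ fun v => ?_)
  simp only [Circle.smul_def, smul_eq_mul, Complex.real_smul, mul_comm]

lemma tendsto_integral_fourierChar_inv_mul (hμ : μ ≪ lam) {w : StrongDual ℝ V} (hw : w ≠ 0) :
    Tendsto (fun η : ℝ => ∫ v, (𝐞 (η⁻¹ * w v) : ℂ) ∂μ) (𝓝[≠] 0) (𝓝 0) := by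
  have hcocompact := tendsto_neg_inv_smul_cobounded hw
  rw [Metric.cobounded_eq_cocompact] at hcocompact
  simpa [Function.comp_def] using (tendsto_integral_fourierChar_cocompact hμ).comp hcocompact

end RiemannLebesgue

section Torus

open UnitAddTorus

/-- The projection of Euclidean space onto the torus `ℝ^ι / ℤ^ι`. -/
def torusMk {ι : Type*} : C(ι → ℝ, UnitAddTorus ι) where
  toFun y i := y i
  continuous_toFun := by fun_prop

lemma isOpenQuotientMap_torusMk {ι : Type*} : IsOpenQuotientMap (torusMk (ι := ι)) :=
  IsOpenQuotientMap.piMap fun _ => QuotientAddGroup.isOpenQuotientMap_mk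

lemma exists_eq_add_intCast_of_torusMk_eq {ι : Type*} {y z : ι → ℝ}
    (h : torusMk y = torusMk z) : ∃ k : ι → ℤ, y = z + fun i => (k i : ℝ) := by
  have hcoord (i : ι) : ∃ k : ℤ, y i = z i + k := by
    obtain ⟨k, hk⟩ := (AddCircle.coe_eq_zero_iff 1).1
      ((AddCircle.coe_sub ..).trans (sub_eq_zero.2 (congrFun h i)))
    exact ⟨k, by simpa [sub_eq_iff_eq_add'] using hk.symm⟩
  choose k hk using hcoord
  exact ⟨k, funext hk⟩

lemma exists_continuousMap_torusMk_eq {m : ℕ} {α : Type*} [TopologicalSpace α]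
    {g : (Fin m → ℝ) → α} (hg : Continuous g) (hper : Zper g) :
    ∃ G : C(UnitAddTorus (Fin m), α), ∀ y, G (torusMk y) = g y := by
  have hfac : Function.FactorsThrough (⟨g, hg⟩ : C(Fin m → ℝ, α)) torusMk := by
    intro y z hyz
    obtain ⟨k, rfl⟩ := exists_eq_add_intCast_of_torusMk_eq hyz
    exact hper k z
  exact ⟨isOpenQuotientMap_torusMk.isQuotientMap.lift _ hfac, DFunLike.congr_fun
    (isOpenQuotientMap_torusMk.isQuotientMap.lift_comp _ hfac)⟩

lemma norm_eq_iSup_norm_torusMk {ι E : Type*} [NormedAddCommGroup E]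
    (G : C(UnitAddTorus ι, E)) : ‖G‖ = ⨆ y, ‖G (torusMk y)‖ := by
  rw [G.norm_eq_iSup_norm, isOpenQuotientMap_torusMk.surjective.iSup_comp (g := fun t => ‖G t‖)]

lemma integrable_of_integrable_iSup_torusMk {X E ι : Type*} [Finite ι] [MeasurableSpace X]
    {μ : Measure X} [NormedAddCommGroup E] [CompleteSpace E] [SecondCountableTopology E]
    [MeasurableSpace E] [BorelSpace E] {F : X → C(UnitAddTorus ι, E)}
    (hmeas : ∀ y, AEMeasurable (fun x => F x (torusMk y)) μ)
    (hint : Integrable (fun x => ⨆ y, ‖F x (torusMk y)‖) μ) : Integrable F μ := by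
  have hF : AEStronglyMeasurable F μ :=
    aestronglyMeasurable_of_aemeasurable_eval (isOpenQuotientMap_torusMk.surjective.forall.2 hmeas)
  simpa only [← norm_eq_iSup_norm_torusMk, integrable_norm_iff hF] using hint

lemma mFourier_torusMk {ι : Type*} [Fintype ι] (k : ι → ℤ) (y : ι → ℝ) :
    mFourier k (torusMk y) = (𝐞 ((fun i => (k i : ℝ)) ⬝ᵥ y) : ℂ) := by
  change ∏ i, fourier (k i) (y i : UnitAddCircle) = _
  simp only [fourier_coe_apply, ← Complex.exp_sum, Real.fourierChar_apply, dotProduct]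
  congr 1
  push_cast
  rw [Finset.mul_sum, Finset.sum_mul]
  exact Finset.sum_congr rfl fun i _ => by ring

lemma setIntegral_fourier_eq_zero {n : ℤ} (hn : n ≠ 0) :
    ∫ y in Set.Ioo (0 : ℝ) 1, fourier n (y : UnitAddCircle) = 0 := by
  have hcoeff := fourierCoeff_eq_intervalIntegral (T := 1) (fourier n) 0 0
  simpa [fourierCoeff_fourier, hn.symm, intervalIntegral.integral_of_le,
    integral_Ioc_eq_integral_Ioo] using hcoeff.symm

lemma setIntegral_cube_mFourier_eq_zero {m : ℕ} {k : Fin m → ℤ} (hk : k ≠ 0) :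
    ∫ y in cube m, mFourier k (torusMk y) = 0 := by
  obtain ⟨i, hi⟩ := Function.ne_iff.1 hk
  rw [cube, volume_pi, Measure.restrict_pi_pi]
  change ∫ y : Fin m → ℝ, ∏ i, fourier (k i) (y i : UnitAddCircle) ∂_ = 0
  rw [integral_fintype_prod_eq_prod (fun i (y : ℝ) => fourier (k i) (y : UnitAddCircle))]
  exact Finset.prod_eq_zero (Finset.mem_univ i) (setIntegral_fourier_eq_zero hi)

lemma volume_cube (m : ℕ) : volume (cube m) = 1 := by
  simp [cube, volume_pi_pi]

instance (m : ℕ) : IsProbabilityMeasure (volume.restrict (cube m)) :=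
  ⟨by rw [Measure.restrict_apply_univ, volume_cube]⟩

variable (𝕜 : Type*) [RCLike 𝕜]

/-- The average over one period cell, as a functional on the continuous functions on the torus. -/
def cubeAverage (m : ℕ) : C(UnitAddTorus (Fin m), 𝕜) →L[𝕜] 𝕜 :=
  (L1.integralCLM' 𝕜).comp (ContinuousMap.toLp 1 ((volume.restrict (cube m)).map torusMk) 𝕜)

lemma cubeAverage_apply {m : ℕ} (c : C(UnitAddTorus (Fin m), 𝕜)) :
    cubeAverage 𝕜 m c = ∫ y in cube m, c (torusMk y) := by
  rw [← integral_map torusMk.measurable.aemeasurable c.continuous.aestronglyMeasurable]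
  exact (L1.integral_eq' ..).symm.trans <| (L1.integral_eq_integral _).trans <|
    integral_congr_ae (ContinuousMap.coeFn_toLp ..)

variable {V : Type*} [NormedAddCommGroup V] [NormedSpace ℝ V] [MeasurableSpace V] [BorelSpace V]
  {lam μ : Measure V} {m : ℕ} {A : V →L[ℝ] (Fin m → ℝ)}

lemma aestronglyMeasurable_torusMk_smul (a : ℝ) :
    AEStronglyMeasurable (fun v => torusMk (a • A v)) μ :=
  Continuous.aestronglyMeasurable (by fun_prop)

variable [FiniteDimensional ℝ V] [lam.IsAddHaarMeasure]

lemma tendsto_integral_mFourier_torusMk [IsFiniteMeasure μ] (hμ : μ ≪ lam)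
    (hA : ∀ k : Fin m → ℤ, k ≠ 0 → ∃ v, (fun i => (k i : ℝ)) ⬝ᵥ A v ≠ 0) (k : Fin m → ℤ) :
    Tendsto (fun η : ℝ => ∫ v, mFourier k (torusMk (η⁻¹ • A v)) ∂μ) (𝓝[≠] 0)
      (𝓝 (μ.real Set.univ • cubeAverage ℂ m (mFourier k))) := by
  obtain rfl | hk := eq_or_ne k 0
  · simp [cubeAverage_apply, mFourier_zero]
  · obtain ⟨v, hv⟩ := hA k hk
    let w : StrongDual ℝ V :=
      (dotProductBilin ℝ ℝ fun i => (k i : ℝ)).toContinuousLinearMap.comp A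
    have hw : w ≠ 0 := fun h => hv (DFunLike.congr_fun h v)
    rw [cubeAverage_apply, setIntegral_cube_mFourier_eq_zero hk, smul_zero]
    refine (tendsto_integral_fourierChar_inv_mul hμ hw).congr fun η => ?_
    simp only [mFourier_torusMk, dotProduct_smul, smul_eq_mul]
    rfl

theorem averagesTo_torusMk (hμ : μ ≪ lam)
    (hA : ∀ k : Fin m → ℤ, k ≠ 0 → ∃ v, (fun i => (k i : ℝ)) ⬝ᵥ A v ≠ 0)
    {F : V → C(UnitAddTorus (Fin m), ℂ)} (hF : Integrable F μ) :
    AveragesTo μ (𝓝[≠] 0) (fun (η : ℝ) v => torusMk (η⁻¹ • A v)) (cubeAverage ℂ m) F := by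
  refine AveragesTo.of_integrable (fun η => aestronglyMeasurable_torusMk_smul η⁻¹)
    span_mFourier_closure_eq_top ?_ hF
  rintro _ ⟨k, rfl⟩ s hs hμs
  have : IsFiniteMeasure (μ.restrict s) := isFiniteMeasure_restrict.2 hμs
  refine AveragesTo.indicator_const hs ?_
  simpa only [measureReal_restrict_apply_univ] using
    tendsto_integral_mFourier_torusMk (Measure.restrict_le_self.absolutelyContinuous.trans hμ) hA k

theorem averagesTo_torusMk_real (hμ : μ ≪ lam)
    (hA : ∀ k : Fin m → ℤ, k ≠ 0 → ∃ v, (fun i => (k i : ℝ)) ⬝ᵥ A v ≠ 0)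
    {F : V → C(UnitAddTorus (Fin m), ℝ)} (hF : Integrable F μ) :
    AveragesTo μ (𝓝[≠] 0) (fun (η : ℝ) v => torusMk (η⁻¹ • A v)) (cubeAverage ℝ m) F := by
  have hcomplex := averagesTo_torusMk hμ hA
    ((Complex.ofRealCLM.compLeftContinuous ℝ (UnitAddTorus (Fin m))).integrable_comp hF)
  simpa [AveragesTo, cubeAverage_apply, integral_complex_ofReal, tendsto_ofReal_iff]
    using hcomplex

end Torus

lemma Irr.exists_dotProduct_mulVec_ne_zero {m n : ℕ} {R : Matrix (Fin m) (Fin n) ℝ} (hR : Irr R)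
    {k : Fin m → ℤ} (hk : k ≠ 0) : ∃ x, (fun i => (k i : ℝ)) ⬝ᵥ R.mulVec x ≠ 0 := by
  refine ⟨R.transpose.mulVec fun i => (k i : ℝ), ?_⟩
  rw [Matrix.dotProduct_mulVec, ← Matrix.mulVec_transpose]
  exact dotProduct_self_eq_zero.not.2 (hR k hk)

theorem stmt1_general {n m : ℕ} {μ : Measure (Fin n → ℝ)} (hμ : μ ≪ volume)
    {R : Matrix (Fin m) (Fin n) ℝ} (hR : Irr R) {f : (Fin n → ℝ) → (Fin m → ℝ) → ℝ}
    (hcont : ∀ x, Continuous (f x)) (hper : ∀ x, Zper (f x))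
    (hmeas : ∀ y, AEMeasurable (fun x => f x y) μ)
    (hint : Integrable (fun x => ⨆ y, |f x y|) μ) :
    (∀ η : ℝ, η ≠ 0 → AEMeasurable (fun x => f x (η⁻¹ • R.mulVec x)) μ) ∧
    (∀ η : ℝ, ∫ x, |f x (η⁻¹ • R.mulVec x)| ∂μ ≤ ∫ x, ⨆ y, |f x y| ∂μ) ∧
    Tendsto (fun η : ℝ => ∫ x, f x (η⁻¹ • R.mulVec x) ∂μ) (𝓝[≠] 0)
      (𝓝 (∫ x, (∫ y in cube m, f x y) ∂μ)) := by
  choose F hF using fun x => exists_continuousMap_torusMk_eq (hcont x) (hper x)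
  simp only [← hF, ← Real.norm_eq_abs] at hmeas hint ⊢
  have hFint : Integrable F μ := integrable_of_integrable_iSup_torusMk hmeas hint
  let A : (Fin n → ℝ) →L[ℝ] (Fin m → ℝ) := R.mulVecLin.toContinuousLinearMap
  have hφ (η : ℝ) := integrable_eval_comp hFint
    (aestronglyMeasurable_torusMk_smul (μ := μ) (A := A) η⁻¹)
  refine ⟨fun η _ => (hφ η).aemeasurable, fun η => ?_, ?_⟩
  · simp only [← norm_eq_iSup_norm_torusMk]
    exact integral_mono (hφ η).norm hFint.norm fun x => (F x).norm_coe_le_norm _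
  · have hlim := averagesTo_torusMk_real (A := A) hμ
      (fun k hk => hR.exists_dotProduct_mulVec_ne_zero hk) hFint
    simp only [AveragesTo, cubeAverage_apply] at hlim
    exact hlim

/-- for `f ∈ L¹(Ω; C_♯(Y^m))` and `R` satisfying the irrationality
condition, `x ↦ f(x, Rx/η)` is measurable, its `L¹` norm is bounded by
`∫_Ω sup_y |f(x,y)| dx`, and its integral converges to the mean `∫_Ω ∫_{Y^m} f`. -/
theorem stmt1 {n m : ℕ} (Ω : Set (Fin n → ℝ)) (hΩo : IsOpen Ω)
    (hΩb : Bornology.IsBounded Ω)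
    (R : Matrix (Fin m) (Fin n) ℝ) (hR : Irr R)
    (f : (Fin n → ℝ) → (Fin m → ℝ) → ℝ)
    (hcont : ∀ x, Continuous (f x)) (hper : ∀ x, Zper (f x))
    (hmeas : ∀ y, Measurable fun x => f x y)
    (hint : Integrable (fun x => ⨆ y, |f x y|) (volume.restrict Ω)) :
    (∀ η : ℝ, η ≠ 0 → AEMeasurable (fun x => f x (η⁻¹ • R.mulVec x)) (volume.restrict Ω)) ∧
    (∀ η : ℝ, ∫ x in Ω, |f x (η⁻¹ • R.mulVec x)| ≤ ∫ x in Ω, ⨆ y, |f x y|) ∧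
    Tendsto (fun η : ℝ => ∫ x in Ω, f x (η⁻¹ • R.mulVec x)) (𝓝[>] 0)
      (𝓝 (∫ x in Ω, ∫ y in cube m, f x y)) := by
  obtain ⟨hae, hnorm, hlim⟩ := stmt1_general Measure.restrict_le_self.absolutelyContinuous hR
    hcont hper (fun y => (hmeas y).aemeasurable) hint
  exact ⟨hae, hnorm, hlim.mono_left (nhdsGT_le_nhdsNE 0)⟩
end
end

section
/- Let Ω ⊂ ℝⁿ be bounded open, Y^m = (0,1)^m with m > n, and R an m×n matrix satisfying R^T k ≠ 0 for all nonzero k ∈ ℤ^m. If a sequence (u_η) converges strongly to u in L^p(Ω), 1 < p < ∞, then (u_η) two-scale cut-and-projection converges weakly to the function u₀(x,y) = u(x) (independent of y). -/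
open MeasureTheory Filter Topology Matrix

noncomputable section

/-! Composing a test function `φ` with the covering map of the torus `𝕋^m = ℝ^m / ℤ^m` turns it into
an element `Φ` of `L^q(Ω; C(𝕋^m))`. For a limit `v ∈ L^p(Ω)` not depending on `η`, the claim is then
that `∫_Ω (v Φ)(x)(Rx/η mod ℤ^m) dx` tends to `∫_Ω ∫_{𝕋^m} (v Φ)(x)(t) dt dx`, where `v Φ` lies in
`L¹(Ω; C(𝕋^m))` by Hölder's inequality. By density it is enough to treat `1_s ⊗ e_k` for a
measurable set `s` and a character `e_k` of the torus. Since `e_k(Rx/η) = exp(2πi (Rᵀk · x)/η)` and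
`Rᵀk ≠ 0` for `k ≠ 0`, this case is the Riemann–Lebesgue lemma. Replacing `v` by `u_η` changes the
integral by at most `‖u_η - v‖_p ‖Φ‖_q`, which tends to `0`. -/

section ContinuousMapEval

variable {X K E : Type*} [MeasurableSpace X] {μ : Measure X}
  [TopologicalSpace K] [CompactSpace K] [NormedAddCommGroup E]

/-- Evaluation at a dense sequence embeds `C(K, E)` measurably into a countable product. -/
lemma aestronglyMeasurable_of_forall_aemeasurable_apply [T2Space K]
    [SecondCountableTopology K] [SecondCountableTopology E] [CompleteSpace E]
    [MeasurableSpace E] [BorelSpace E]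
    {Ψ : X → C(K, E)} (hΨ : ∀ t, AEMeasurable (fun x => Ψ x t) μ) :
    AEStronglyMeasurable Ψ μ := by
  cases isEmpty_or_nonempty K
  · exact (aestronglyMeasurable_const (b := 0)).congr (.of_forall fun x => Subsingleton.elim _ _)
  borelize C(K, E)
  let evalDense : C(K, E) → ℕ → E := fun f i => f (TopologicalSpace.denseSeq K i)
  have continuous_evalDense : Continuous evalDense :=
    continuous_pi fun i => continuous_eval_const _
  have injective_evalDense : Function.Injective evalDense := fun f g hfg =>
    DFunLike.coe_injective <| (TopologicalSpace.denseRange_denseSeq K).equalizer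
      f.continuous g.continuous hfg
  have aemeasurable_Ψ : AEMeasurable Ψ μ := by
    rw [← (continuous_evalDense.measurableEmbedding injective_evalDense).aemeasurable_comp_iff,
      aemeasurable_pi_iff]
    exact fun i => hΨ (TopologicalSpace.denseSeq K i)
  exact aemeasurable_Ψ.aestronglyMeasurable

variable {Ψ Φ : X → C(K, E)} {a : X → K}

lemma aestronglyMeasurable_continuousMap_apply (hΨ : AEStronglyMeasurable Ψ μ)
    (ha : AEStronglyMeasurable a μ) : AEStronglyMeasurable (fun x => Ψ x (a x)) μ :=
  (continuous_eval (F := C(K, E))).comp_aestronglyMeasurable (hΨ.prodMk ha)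

lemma integrable_continuousMap_apply (hΨ : Integrable Ψ μ) (ha : AEStronglyMeasurable a μ) :
    Integrable (fun x => Ψ x (a x)) μ :=
  hΨ.mono (aestronglyMeasurable_continuousMap_apply hΨ.1 ha)
    (.of_forall fun x => (Ψ x).norm_coe_le_norm _)

lemma dist_integral_continuousMap_apply_le [NormedSpace ℝ E] (hΨ : Integrable Ψ μ)
    (hΦ : Integrable Φ μ) (ha : AEStronglyMeasurable a μ) :
    dist (∫ x, Ψ x (a x) ∂μ) (∫ x, Φ x (a x) ∂μ) ≤ ∫ x, ‖Ψ x - Φ x‖ ∂μ := by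
  rw [dist_eq_norm, ← integral_sub (integrable_continuousMap_apply hΨ ha)
    (integrable_continuousMap_apply hΦ ha)]
  exact norm_integral_le_of_norm_le (hΨ.sub hΦ).norm
    (.of_forall fun x => (Ψ x - Φ x).norm_coe_le_norm (a x))

end ContinuousMapEval

section MixingConvergence

variable {J X K : Type*} {l : Filter J} [MeasurableSpace X] {μ : Measure X} [TopologicalSpace K]
  [MeasurableSpace K] {ν : Measure K} {a : J → X → K}

/-- Mixing convergence (in the sense of Rényi) of the `K`-valued functions `a j` to the law `ν`: on
every set of finite measure, the values of `a j` become distributed according to `ν`. -/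
def TendstoMixing (a : J → X → K) (l : Filter J) (μ : Measure X) (ν : Measure K) : Prop :=
  ∀ s, MeasurableSet s → μ s ≠ ⊤ → ∀ c : C(K, ℝ),
    Tendsto (fun j => ∫ x in s, c (a j x) ∂μ) l (𝓝 (μ.real s • ∫ t, c t ∂ν))

lemma TendstoMixing.tendsto_integral_indicator (h : TendstoMixing a l μ ν) {s : Set X}
    (hs : MeasurableSet s) (hμs : μ s ≠ ⊤) (c : C(K, ℝ)) :
    Tendsto (fun j => ∫ x, s.indicator (fun _ => c) x (a j x) ∂μ) l
      (𝓝 (∫ x, ∫ t, s.indicator (fun _ => c) x t ∂ν ∂μ)) := by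
  have hleft (j : J) : ∫ x, s.indicator (fun _ => c) x (a j x) ∂μ = ∫ x in s, c (a j x) ∂μ := by
    rw [← integral_indicator hs]
    congr with x
    by_cases hx : x ∈ s <;> simp [hx]
  have hright : ∫ x, ∫ t, s.indicator (fun _ => c) x t ∂ν ∂μ = μ.real s • ∫ t, c t ∂ν := by
    rw [← setIntegral_const, ← integral_indicator hs]
    congr with x
    by_cases hx : x ∈ s <;> simp [hx]
  simpa only [hleft, hright] using h s hs hμs c

variable {𝕜 : Type*} [RCLike 𝕜] [CompactSpace K] [BorelSpace K]

variable (ν 𝕜) in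
/-- Integration against a finite measure `ν`, as a continuous linear functional on `C(K, 𝕜)`. -/
def integralCLM [IsFiniteMeasure ν] : C(K, 𝕜) →L[𝕜] 𝕜 :=
  (L1.integralCLM' 𝕜).comp (ContinuousMap.toLp 1 ν 𝕜)

lemma integralCLM_apply [IsFiniteMeasure ν] (c : C(K, 𝕜)) : integralCLM ν 𝕜 c = ∫ t, c t ∂ν := by
  rw [integralCLM, ContinuousLinearMap.comp_apply, ← L1.integral_eq', L1.integral_eq_integral]
  exact integral_congr_ae (ContinuousMap.coeFn_toLp ν c)

/-- Weyl's criterion for equidistribution. -/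
lemma tendsto_integral_comp_of_topologicalClosure_span_eq_top [IsFiniteMeasure μ]
    [IsFiniteMeasure ν] (ha : ∀ j, AEStronglyMeasurable (a j) μ) {T : Set C(K, 𝕜)}
    (hT : (Submodule.span 𝕜 T).topologicalClosure = ⊤)
    (h : ∀ c ∈ T, Tendsto (fun j => ∫ x, c (a j x) ∂μ) l (𝓝 (μ.real Set.univ • ∫ t, c t ∂ν)))
    (c : C(K, 𝕜)) :
    Tendsto (fun j => ∫ x, c (a j x) ∂μ) l (𝓝 (μ.real Set.univ • ∫ t, c t ∂ν)) := by
  simp_rw [← integralCLM_apply] at h ⊢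
  have hint (c : C(K, 𝕜)) (j : J) : Integrable (fun x => c (a j x)) μ :=
    integrable_continuousMap_apply (integrable_const c) (ha j)
  have hequi : Equicontinuous fun j (c : C(K, 𝕜)) => ∫ x, c (a j x) ∂μ := by
    refine Metric.equicontinuous_of_continuity_modulus (fun r => μ.real Set.univ * r)
      (Continuous.tendsto' (by fun_prop) _ _ (mul_zero _)) _ fun f g j => ?_
    simpa [dist_eq_norm] using dist_integral_continuousMap_apply_le
      (integrable_const f) (integrable_const g) (ha j)
  have hclosed := hequi.isClosed_setOfPred_tendsto (l := l)
    (f := fun c => μ.real Set.univ • integralCLM ν 𝕜 c) (by fun_prop)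
  have hspan : ∀ c ∈ Submodule.span 𝕜 T,
      Tendsto (fun j => ∫ x, c (a j x) ∂μ) l (𝓝 (μ.real Set.univ • integralCLM ν 𝕜 c)) := by
    intro c hc
    induction hc using Submodule.span_induction with
    | mem c hc => exact h c hc
    | zero => simpa using tendsto_const_nhds
    | add f g _ _ hf hg =>
      simpa only [ContinuousMap.add_apply, integral_add (hint f _) (hint g _), map_add, smul_add]
        using hf.add hg
    | smul r f _ hf =>
      simpa only [ContinuousMap.smul_apply, integral_smul, map_smul, smul_comm _ r]
        using hf.const_smul r
  have hc : c ∈ (Submodule.span 𝕜 T).topologicalClosure := hT ▸ Submodule.mem_top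
  exact closure_minimal hspan hclosed hc

lemma tendstoMixing_of_topologicalClosure_span_eq_top [IsFiniteMeasure ν]
    (ha : ∀ j, AEStronglyMeasurable (a j) μ) {T : Set C(K, 𝕜)}
    (hT : (Submodule.span 𝕜 T).topologicalClosure = ⊤)
    (h : ∀ s, MeasurableSet s → μ s ≠ ⊤ → ∀ c ∈ T,
      Tendsto (fun j => ∫ x in s, c (a j x) ∂μ) l (𝓝 (μ.real s • ∫ t, c t ∂ν))) :
    TendstoMixing a l μ ν := by
  intro s hs hμs c
  have : IsFiniteMeasure (μ.restrict s) := ⟨by simpa using hμs.lt_top⟩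
  have hlim := tendsto_integral_comp_of_topologicalClosure_span_eq_top (μ := μ.restrict s) (ν := ν)
    (fun j => (ha j).restrict) hT (by simpa using h s hs hμs)
    ((⟨RCLike.ofReal, RCLike.continuous_ofReal⟩ : C(ℝ, 𝕜)).comp c)
  simpa [integral_ofReal, Function.comp_def] using (RCLike.continuous_re.tendsto _).comp hlim

variable (l ν) in
lemma isClosed_setOf_tendsto_integral_continuousMap_apply [IsFiniteMeasure ν]
    (ha : ∀ j, AEStronglyMeasurable (a j) μ) :
    IsClosed {Ψ : X →₁[μ] C(K, ℝ) | Tendsto (fun j => ∫ x, Ψ x (a j x) ∂μ) l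
      (𝓝 (∫ x, ∫ t, Ψ x t ∂ν ∂μ))} := by
  refine Equicontinuous.isClosed_setOfPred_tendsto
    (F := fun j (Ψ : X →₁[μ] C(K, ℝ)) => ∫ x, Ψ x (a j x) ∂μ)
    (f := fun Ψ => ∫ x, ∫ t, Ψ x t ∂ν ∂μ) ?_ ?_
  · refine Metric.equicontinuous_of_continuity_modulus id tendsto_id _ fun Ψ Φ j => ?_
    calc dist (∫ x, Ψ x (a j x) ∂μ) (∫ x, Φ x (a j x) ∂μ)
        ≤ ∫ x, ‖Ψ x - Φ x‖ ∂μ := dist_integral_continuousMap_apply_le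
          (L1.integrable_coeFn Ψ) (L1.integrable_coeFn Φ) (ha j)
      _ = dist Ψ Φ := by
        rw [dist_eq_norm, L1.norm_eq_integral_norm]
        exact integral_congr_ae ((Lp.coeFn_sub Ψ Φ).mono fun x hx => (congrArg norm hx).symm)
  · simp_rw [← integralCLM_apply,
      fun Ψ : X →₁[μ] C(K, ℝ) => (integralCLM ν ℝ).integral_comp_comm (L1.integrable_coeFn Ψ)]
    exact (integralCLM ν ℝ).continuous.comp continuous_integral

/-- Mixing is exactly the claim for `Ψ = 1_s ⊗ c`, and such `Ψ` span a dense subspace of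
`L¹(μ; C(K))`, on which the integrals are equicontinuous in `j`. -/
theorem TendstoMixing.tendsto_integral [IsFiniteMeasure ν] (h : TendstoMixing a l μ ν)
    (ha : ∀ j, AEStronglyMeasurable (a j) μ) {Ψ : X → C(K, ℝ)} (hΨ : Integrable Ψ μ) :
    Tendsto (fun j => ∫ x, Ψ x (a j x) ∂μ) l (𝓝 (∫ x, ∫ t, Ψ x t ∂ν ∂μ)) := by
  refine Integrable.induction (fun Ψ : X → C(K, ℝ) =>
    Tendsto (fun j => ∫ x, Ψ x (a j x) ∂μ) l (𝓝 (∫ x, ∫ t, Ψ x t ∂ν ∂μ)))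
    (fun c s hs hμs => h.tendsto_integral_indicator hs hμs.ne c) ?_
    (isClosed_setOf_tendsto_integral_continuousMap_apply l ν ha) ?_ hΨ
  · intro Ψ Φ _ hΨ hΦ hlimΨ hlimΦ
    have hleft (j : J) : ∫ x, (Ψ + Φ) x (a j x) ∂μ =
        ∫ x, Ψ x (a j x) ∂μ + ∫ x, Φ x (a j x) ∂μ :=
      integral_add (integrable_continuousMap_apply hΨ (ha j))
        (integrable_continuousMap_apply hΦ (ha j))
    have hright : ∫ x, ∫ t, (Ψ + Φ) x t ∂ν ∂μ =
        ∫ x, ∫ t, Ψ x t ∂ν ∂μ + ∫ x, ∫ t, Φ x t ∂ν ∂μ := by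
      simp_rw [← integralCLM_apply, Pi.add_apply, map_add]
      exact integral_add ((integralCLM ν ℝ).integrable_comp hΨ)
        ((integralCLM ν ℝ).integrable_comp hΦ)
    simpa only [hleft, hright] using hlimΨ.add hlimΦ
  · intro Ψ Φ hΨΦ _ hlimΨ
    rw [integral_congr_ae (hΨΦ.mono fun x hx => by simp only [hx] :
      (fun x => ∫ t, Ψ x t ∂ν) =ᵐ[μ] fun x => ∫ t, Φ x t ∂ν)] at hlimΨ
    exact hlimΨ.congr fun j => integral_congr_ae (hΨΦ.mono fun x hx => by simp only [hx])

end MixingConvergence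

section Torus

variable {ι : Type*} {m : ℕ}

variable (ι) in
/-- The covering map `ℝ^ι → (ℝ/ℤ)^ι`. -/
def toTorus : C(ι → ℝ, UnitAddTorus ι) :=
  ⟨fun y i => y i, continuous_pi fun i => (AddCircle.continuous_mk' 1).comp (continuous_apply i)⟩

lemma isQuotientMap_toTorus : IsQuotientMap (toTorus ι) := by
  have isOpenMap_toTorus : IsOpenMap (toTorus ι) :=
    IsOpenMap.piMap (fun _ => QuotientAddGroup.isOpenMap_coe)
      (.of_forall fun _ => QuotientAddGroup.mk_surjective)
  exact isOpenMap_toTorus.isQuotientMap (toTorus ι).continuous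
    (Function.Surjective.piMap fun _ => QuotientAddGroup.mk_surjective)

lemma toTorus_eq_toTorus_iff {y z : ι → ℝ} :
    toTorus ι y = toTorus ι z ↔ ∃ k : ι → ℤ, y = z + fun i => (k i : ℝ) := by
  have hcoord (i : ι) : (y i : UnitAddCircle) = z i ↔ ∃ k : ℤ, y i = z i + k := by
    rw [eq_comm, QuotientAddGroup.eq, AddSubgroup.mem_zmultiples_iff]
    simp [eq_neg_add_iff_add_eq, eq_comm]
  simp only [toTorus, ContinuousMap.coe_mk, funext_iff, hcoord, Pi.add_apply]
  exact Classical.skolem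

lemma measurePreserving_toTorus :
    MeasurePreserving (toTorus (Fin m)) (volume.restrict (cube m)) volume := by
  have measurePreserving_coord :
      MeasurePreserving ((↑) : ℝ → UnitAddCircle) (volume.restrict (Set.Ioo 0 1)) volume := by
    simpa [restrict_Ioo_eq_restrict_Ioc] using UnitAddCircle.measurePreserving_mk 0
  rw [cube, volume_pi, Measure.restrict_pi_pi, volume_pi]
  exact measurePreserving_pi _ (fun _ => (volume : Measure UnitAddCircle)) fun _ =>
    measurePreserving_coord

variable [Fintype ι]

lemma mFourier_toTorus (k : ι → ℤ) (y : ι → ℝ) :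
    UnitAddTorus.mFourier k (toTorus ι y) = Real.fourierChar ((fun i => (k i : ℝ)) ⬝ᵥ y) := by
  simp only [UnitAddTorus.mFourier, toTorus, ContinuousMap.coe_mk, fourier_coe_apply,
    Real.fourierChar_apply, ← Complex.exp_sum, dotProduct]
  congr 1
  push_cast [Finset.mul_sum, Finset.sum_mul]
  exact Finset.sum_congr rfl fun i _ => by ring

lemma integral_mFourier_eq_zero {k : ι → ℤ} (hk : k ≠ 0) :
    ∫ t, UnitAddTorus.mFourier k t = 0 := by
  obtain ⟨i, hi⟩ := Function.ne_iff.mp hk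
  simp only [UnitAddTorus.mFourier, ContinuousMap.coe_mk]
  rw [integral_fintype_prod_volume_eq_prod (f := fun i (t : UnitAddCircle) => fourier (k i) t)]
  exact Finset.prod_eq_zero (Finset.mem_univ i) (integral_eq_zero_of_add_right_eq_neg (μ := volume)
    (fourier_add_half_inv_index hi one_pos))

end Torus

namespace Zper

variable {m : ℕ} {Z : Type*} {g : (Fin m → ℝ) → Z}

lemma factorsThrough_toTorus (hper : Zper g) : g.FactorsThrough (toTorus (Fin m)) := by
  intro y z hyz
  obtain ⟨k, rfl⟩ := toTorus_eq_toTorus_iff.1 hyz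
  exact hper k z

variable [TopologicalSpace Z]

/-- The continuous function on the torus induced by a continuous periodic function. -/
def lift (hper : Zper g) (hg : Continuous g) : C(UnitAddTorus (Fin m), Z) :=
  isQuotientMap_toTorus.lift ⟨g, hg⟩ hper.factorsThrough_toTorus

lemma lift_toTorus (hper : Zper g) (hg : Continuous g) (y : Fin m → ℝ) :
    hper.lift hg (toTorus (Fin m) y) = g y :=
  congrArg (fun c => c y) <|
    isQuotientMap_toTorus.lift_comp ⟨g, hg⟩ hper.factorsThrough_toTorus

end Zper

section RiemannLebesgue

variable {J : Type*} {l : Filter J} {η : J → ℝ}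

lemma tendsto_inv_smul_cocompact {V : Type*} [NormedAddCommGroup V] [NormedSpace ℝ V]
    [ProperSpace V] {w : V} (hw : w ≠ 0) (hη : Tendsto η l (𝓝[≠] 0)) :
    Tendsto (fun j => (η j)⁻¹ • w) l (cocompact V) := by
  rw [← Metric.cobounded_eq_cocompact, ← tendsto_norm_atTop_iff_cobounded]
  simp only [norm_smul]
  exact (tendsto_norm_cobounded_atTop.comp (tendsto_inv₀_nhdsNE_zero.comp hη)).atTop_mul_const
    (norm_pos_iff.2 hw)

variable {V : Type*} [NormedAddCommGroup V] [NormedSpace ℝ V] [FiniteDimensional ℝ V]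
  [MeasurableSpace V] [BorelSpace V]

/-- Riemann–Lebesgue lemma for the indicator function of `s`. -/
lemma tendsto_setIntegral_fourierChar_cocompact (μ : Measure V) [μ.IsAddHaarMeasure] (s : Set V) :
    Tendsto (fun w : StrongDual ℝ V => ∫ x in s, (Real.fourierChar (w x) : ℂ) ∂μ)
      (cocompact (StrongDual ℝ V)) (𝓝 0) := by
  have hneg : Tendsto (fun w : StrongDual ℝ V => -w) (cocompact _) (cocompact _) :=
    (Homeomorph.neg _).isClosedEmbedding.tendsto_cocompact
  rw [← Measure.restrict_toMeasurable_of_sFinite s]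
  refine ((tendsto_integral_exp_smul_cocompact
    ((toMeasurable μ s).indicator fun _ => (1 : ℂ)) μ).comp hneg).congr fun w => ?_
  rw [← integral_indicator (measurableSet_toMeasurable μ s)]
  refine integral_congr_ae (.of_forall fun x => ?_)
  by_cases hx : x ∈ toMeasurable μ s <;> simp [hx, Circle.smul_def]

end RiemannLebesgue

section CutAndProject

variable {J : Type*} {l : Filter J} {η : J → ℝ} {m n : ℕ} {R : Matrix (Fin m) (Fin n) ℝ}

lemma tendsto_setIntegral_mFourier_cutAndProject (hR : Irr R) (hη : Tendsto η l (𝓝[≠] 0))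
    (s : Set (Fin n → ℝ)) {k : Fin m → ℤ} (hk : k ≠ 0) :
    Tendsto (fun j => ∫ x in s, UnitAddTorus.mFourier k (toTorus (Fin m) ((η j)⁻¹ • R *ᵥ x))) l
      (𝓝 0) := by
  let w : StrongDual ℝ (Fin n → ℝ) :=
    (dotProductEquiv ℝ (Fin n) (Rᵀ *ᵥ fun i => (k i : ℝ))).toContinuousLinearMap
  have hw : w ≠ 0 := by simpa [w] using hR k hk
  have hphase (j : J) (x : Fin n → ℝ) :
      (fun i => (k i : ℝ)) ⬝ᵥ (η j)⁻¹ • R *ᵥ x = ((η j)⁻¹ • w) x := by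
    simp [w, dotProduct_mulVec, mulVec_transpose, dotProduct_smul]
  simp only [mFourier_toTorus, hphase]
  have hcocompact := tendsto_inv_smul_cocompact hw hη
  exact (tendsto_setIntegral_fourierChar_cocompact volume s).comp hcocompact

theorem tendstoMixing_cutAndProject (hR : Irr R) (hη : Tendsto η l (𝓝[≠] 0))
    (Ω : Set (Fin n → ℝ)) :
    TendstoMixing (fun j x => toTorus (Fin m) ((η j)⁻¹ • R *ᵥ x)) l (volume.restrict Ω)
      volume := by
  refine tendstoMixing_of_topologicalClosure_span_eq_top
    (fun j => Continuous.aestronglyMeasurable (by fun_prop))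
    UnitAddTorus.span_mFourier_closure_eq_top ?_
  rintro s hs - _ ⟨k, rfl⟩
  by_cases hk : k = 0
  · have volume_univ : volume.real (Set.univ : Set (UnitAddTorus (Fin m))) = 1 := by
      simp [measureReal_def, volume_pi, Measure.pi_univ]
    simp [hk, UnitAddTorus.mFourier_zero, volume_univ, tendsto_const_nhds]
  · simpa [integral_mFourier_eq_zero hk, Measure.restrict_restrict hs] using
      tendsto_setIntegral_mFourier_cutAndProject hR hη (s ∩ Ω) hk

end CutAndProject

section Holder

variable {X E J : Type*} [MeasurableSpace X] {μ : Measure X} [NormedAddCommGroup E] {p q : ℝ}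

lemma memLp_of_integrable_norm_rpow {f : X → E} (hp : 0 < p) (hf : AEStronglyMeasurable f μ)
    (hfp : Integrable (fun x => ‖f x‖ ^ p) μ) : MemLp f (ENNReal.ofReal p) μ := by
  rw [← integrable_norm_rpow_iff hf (by simpa using hp) ENNReal.ofReal_ne_top,
    ENNReal.toReal_ofReal hp.le]
  exact hfp

lemma tendsto_integral_mul_zero_of_tendsto_integral_rpow_zero (hpq : p.HolderConjugate q)
    {l : Filter J} {w g : J → X → ℝ} {G : X → ℝ} (hw : ∀ j, MemLp (w j) (ENNReal.ofReal p) μ)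
    (hG : MemLp G (ENNReal.ofReal q) μ) (hgG : ∀ j x, |g j x| ≤ G x)
    (hlim : Tendsto (fun j => ∫ x, |w j x| ^ p ∂μ) l (𝓝 0)) :
    Tendsto (fun j => ∫ x, w j x * g j x ∂μ) l (𝓝 0) := by
  have hbound (j : J) : ‖∫ x, w j x * g j x ∂μ‖ ≤
      (∫ x, |w j x| ^ p ∂μ) ^ (1 / p) * (∫ x, G x ^ q ∂μ) ^ (1 / q) := by
    have : (ENNReal.ofReal p).HolderConjugate (ENNReal.ofReal q) := hpq.ennrealOfReal
    calc ‖∫ x, w j x * g j x ∂μ‖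
        ≤ ∫ x, |w j x| * G x ∂μ := norm_integral_le_of_norm_le ((hw j).norm.integrable_mul hG) <|
          .of_forall fun x => by
            simpa [abs_mul] using mul_le_mul_of_nonneg_left (hgG j x) (abs_nonneg (w j x))
      _ ≤ (∫ x, |w j x| ^ p ∂μ) ^ (1 / p) * (∫ x, G x ^ q ∂μ) ^ (1 / q) :=
        integral_mul_le_Lp_mul_Lq_of_nonneg hpq (.of_forall fun x => abs_nonneg (w j x))
          (.of_forall fun x => (abs_nonneg _).trans (hgG j x)) (hw j).norm hG
  refine squeeze_zero_norm hbound ?_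
  simpa [hpq.ne_zero] using (hlim.rpow_const (.inr hpq.one_div_nonneg)).mul_const _

end Holder

namespace TestFun

variable {n m : ℕ} {p q : ℝ} {Ω : Set (Fin n → ℝ)} {φ : (Fin n → ℝ) → (Fin m → ℝ) → ℝ}

/-- The map `x ↦ φ(x, ·)` with values in `C_♯(Y^m)`, realised as `C(𝕋^m)`. -/
def lift (hφ : TestFun q Ω φ) (x : Fin n → ℝ) : C(UnitAddTorus (Fin m), ℝ) :=
  (hφ.2.1 x).lift (hφ.1 x)

lemma lift_toTorus (hφ : TestFun q Ω φ) (x : Fin n → ℝ) (y : Fin m → ℝ) :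
    hφ.lift x (toTorus (Fin m) y) = φ x y :=
  (hφ.2.1 x).lift_toTorus (hφ.1 x) y

lemma norm_lift (hφ : TestFun q Ω φ) (x : Fin n → ℝ) : ‖hφ.lift x‖ = ⨆ y, |φ x y| := by
  rw [ContinuousMap.norm_eq_iSup_norm, ← isQuotientMap_toTorus.surjective.iSup_comp]
  simp only [lift_toTorus, Real.norm_eq_abs]

lemma memLp_lift (hφ : TestFun q Ω φ) (hq : 0 < q) :
    MemLp hφ.lift (ENNReal.ofReal q) (volume.restrict Ω) := by
  refine memLp_of_integrable_norm_rpow hq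
    (aestronglyMeasurable_of_forall_aemeasurable_apply fun t => ?_)
    (by simpa only [norm_lift] using hφ.2.2.2)
  obtain ⟨y, rfl⟩ := isQuotientMap_toTorus.surjective t
  simpa only [lift_toTorus] using hφ.2.2.1 y

variable {f : (Fin n → ℝ) → ℝ}

lemma integrable_smul_lift (hφ : TestFun q Ω φ) (hpq : p.HolderConjugate q)
    (hf : MemLp f (ENNReal.ofReal p) (volume.restrict Ω)) :
    Integrable (fun x => f x • hφ.lift x) (volume.restrict Ω) := by
  have : (ENNReal.ofReal p).HolderConjugate (ENNReal.ofReal q) := hpq.ennrealOfReal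
  exact memLp_one_iff_integrable.1 ((hφ.memLp_lift hpq.symm.pos).smul hf)

lemma integrable_mul_comp (hφ : TestFun q Ω φ) (hpq : p.HolderConjugate q)
    (hf : MemLp f (ENNReal.ofReal p) (volume.restrict Ω)) {b : (Fin n → ℝ) → Fin m → ℝ}
    (hb : Continuous b) : Integrable (fun x => f x * φ x (b x)) (volume.restrict Ω) := by
  simpa [lift_toTorus] using integrable_continuousMap_apply (hφ.integrable_smul_lift hpq hf)
    ((toTorus (Fin m)).continuous.comp hb).aestronglyMeasurable

end TestFun

section WeakTwoScale

variable {n m : ℕ} {p q : ℝ} {Ω : Set (Fin n → ℝ)} {R : Matrix (Fin m) (Fin n) ℝ} {η : ℕ → ℝ}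

theorem weakTwoScale_const (hpq : p.HolderConjugate q) (hR : Irr R)
    (hη : Tendsto η atTop (𝓝[≠] 0)) {v : (Fin n → ℝ) → ℝ}
    (hv : MemLp v (ENNReal.ofReal p) (volume.restrict Ω)) :
    WeakTwoScale q Ω R η (fun _ => v) (fun x _ => v x) := by
  intro φ hφ
  have hlim := (tendstoMixing_cutAndProject hR hη Ω).tendsto_integral
    (fun j => Continuous.aestronglyMeasurable (by fun_prop)) (hφ.integrable_smul_lift hpq hv)
  have hmean (x : Fin n → ℝ) : ∫ t, v x * hφ.lift x t = ∫ y in cube m, v x * φ x y := by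
    rw [← measurePreserving_toTorus.map_eq,
      integral_map (by fun_prop) (Continuous.aestronglyMeasurable (by fun_prop))]
    simp only [hφ.lift_toTorus]
  simpa only [ContinuousMap.smul_apply, smul_eq_mul, hφ.lift_toTorus, hmean] using hlim

theorem WeakTwoScale.of_tendsto_integral_rpow_sub_zero (hpq : p.HolderConjugate q)
    {u v : ℕ → (Fin n → ℝ) → ℝ} {u₀ : (Fin n → ℝ) → (Fin m → ℝ) → ℝ}
    (hconv : WeakTwoScale q Ω R η v u₀)
    (hu : ∀ k, MemLp (u k) (ENNReal.ofReal p) (volume.restrict Ω))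
    (hv : ∀ k, MemLp (v k) (ENNReal.ofReal p) (volume.restrict Ω))
    (hsub : Tendsto (fun k => ∫ x in Ω, |u k x - v k x| ^ p) atTop (𝓝 0)) :
    WeakTwoScale q Ω R η u u₀ := by
  intro φ hφ
  let φ' (k : ℕ) (x : Fin n → ℝ) : ℝ := φ x ((η k)⁻¹ • R *ᵥ x)
  have hφ'_le (k : ℕ) (x : Fin n → ℝ) : |φ' k x| ≤ ‖hφ.lift x‖ := by
    simpa [φ', hφ.lift_toTorus] using
      (hφ.lift x).norm_coe_le_norm (toTorus (Fin m) ((η k)⁻¹ • R *ᵥ x))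
  have hlim : Tendsto (fun k => ∫ x in Ω, (u k x - v k x) * φ' k x) atTop (𝓝 0) :=
    tendsto_integral_mul_zero_of_tendsto_integral_rpow_zero hpq (fun k => (hu k).sub (hv k))
      (hφ.memLp_lift hpq.symm.pos).norm hφ'_le hsub
  have hint (k : ℕ) {f : (Fin n → ℝ) → ℝ}
      (hf : MemLp f (ENNReal.ofReal p) (volume.restrict Ω)) :
      Integrable (fun x => f x * φ' k x) (volume.restrict Ω) :=
    hφ.integrable_mul_comp hpq hf (by fun_prop)
  have hsplit (k : ℕ) : ∫ x in Ω, u k x * φ' k x =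
      (∫ x in Ω, (u k x - v k x) * φ' k x) + ∫ x in Ω, v k x * φ' k x := by
    simp_rw [sub_mul]
    rw [integral_sub (hint k (hu k)) (hint k (hv k)), sub_add_cancel]
  simpa only [φ', hsplit, zero_add] using hlim.add (hconv φ hφ)

end WeakTwoScale

theorem stmt3_general {n m : ℕ} {p q : ℝ} (hpq : p.HolderConjugate q) (Ω : Set (Fin n → ℝ))
    {R : Matrix (Fin m) (Fin n) ℝ} (hR : Irr R) {η : ℕ → ℝ} (hη : Tendsto η atTop (𝓝[≠] 0))
    {u : ℕ → (Fin n → ℝ) → ℝ} {v : (Fin n → ℝ) → ℝ}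
    (hu : ∀ k, AEMeasurable (u k) (volume.restrict Ω))
    (huLp : ∀ k, Integrable (fun x => |u k x| ^ p) (volume.restrict Ω))
    (hv : AEMeasurable v (volume.restrict Ω))
    (hvLp : Integrable (fun x => |v x| ^ p) (volume.restrict Ω))
    (hstrong : Tendsto (fun k => ∫ x in Ω, |u k x - v x| ^ p) atTop (𝓝 0)) :
    WeakTwoScale q Ω R η u (fun x _ => v x) := by
  have huLp' (k : ℕ) := memLp_of_integrable_norm_rpow hpq.pos (hu k).aestronglyMeasurable (huLp k)
  have hvLp' := memLp_of_integrable_norm_rpow hpq.pos hv.aestronglyMeasurable hvLp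
  exact (weakTwoScale_const hpq hR hη hvLp').of_tendsto_integral_rpow_sub_zero hpq huLp'
    (fun _ => hvLp') hstrong

/-- if `u_η → u` strongly in `L^p(Ω)` then `u_η` two-scale
cut-and-projection converges weakly to `u₀(x,y) = u(x)`. -/
theorem stmt3 {n m : ℕ} (hnm : n < m) (p q : ℝ) (hp : 1 < p) (hpq : 1 / p + 1 / q = 1)
    (Ω : Set (Fin n → ℝ)) (hΩo : IsOpen Ω) (hΩb : Bornology.IsBounded Ω)
    (R : Matrix (Fin m) (Fin n) ℝ) (hR : Irr R)
    (η : ℕ → ℝ) (hηpos : ∀ k, 0 < η k) (hη : Tendsto η atTop (𝓝 0))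
    (u : ℕ → (Fin n → ℝ) → ℝ) (v : (Fin n → ℝ) → ℝ)
    (hu : ∀ k, AEMeasurable (u k) (volume.restrict Ω))
    (huLp : ∀ k, Integrable (fun x => |u k x| ^ p) (volume.restrict Ω))
    (hv : AEMeasurable v (volume.restrict Ω))
    (hvLp : Integrable (fun x => |v x| ^ p) (volume.restrict Ω))
    (hstrong : Tendsto (fun k => ∫ x in Ω, |u k x - v x| ^ p) atTop (𝓝 0)) :
    WeakTwoScale q Ω R η u (fun x _ => v x) :=
  stmt3_general (Real.holderConjugate_iff.2 ⟨hp, by simpa only [one_div] using hpq⟩) Ω hR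
    (tendsto_nhdsWithin_iff.2 ⟨hη, .of_forall fun k => (hηpos k).ne'⟩) hu huLp hv hvLp hstrong
end
end
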